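/- For every integer d ≥ 0, there exists a real number ε > 0 such that for every finite d-degenerate graph G and every list assignment L for G with |L(v)| ≥ d+2 for all vertices v, the graph G with the list assignment L is ε-flexible. -/

import Mathlib

def IsLColoring {V : Type*} (G : SimpleGraph V) (L : V → Finset ℕ) (φ : V → ℕ) : Prop :=
  (∀ v, φ v ∈ L v) ∧ ∀ ⦃u w : V⦄, G.Adj u w → φ u ≠ φ w

def EpsSat {V : Type*} (G : SimpleGraph V) (L : V → Finset ℕ) (D : Finset V)
    (r : V → ℕ) (ε : ℝ) : Prop :=
  ∃ φ : V → ℕ, IsLColoring G L φ ∧ ε * D.card ≤ ((D.filter fun v => φ v = r v).card : ℝ)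

def Flexible {V : Type*} (G : SimpleGraph V) (L : V → Finset ℕ) (ε : ℝ) : Prop :=
  ∀ (D : Finset V) (r : V → ℕ), (∀ v ∈ D, r v ∈ L v) → EpsSat G L D r ε

/-- `G` is `d`-degenerate: every subgraph of `G` (with at least one vertex)
has a vertex of degree at most `d`. -/
def Degenerate {V : Type*} (G : SimpleGraph V) (d : ℕ) : Prop :=
  ∀ H : G.Subgraph, H.verts.Nonempty → ∃ v ∈ H.verts, (H.neighborSet v).ncard ≤ d

def GoodOn {V : Type} (G : SimpleGraph V) (L : V → Finset ℕ) (S : Finset V) (φ : V → ℕ) : Prop :=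
  (∀ v ∈ S, φ v ∈ L v) ∧ ∀ u ∈ S, ∀ w ∈ S, G.Adj u w → φ u ≠ φ w

open Classical in
noncomputable def ind (P : Prop) : ℝ := if P then 1 else 0

lemma ind_nonneg (P : Prop) : 0 ≤ ind P := by unfold ind; split_ifs <;> norm_num

def FlexDist {V : Type} (G : SimpleGraph V) (L : V → Finset ℕ) (d : ℕ) (S : Finset V)
    (E : ((V → ℕ) → ℝ) →ₗ[ℝ] ℝ) : Prop :=
  (∀ f g, (∀ φ, GoodOn G L S φ → f φ ≤ g φ) → E f ≤ E g) ∧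
  (∀ f a, a ≤ E f → ∃ φ, GoodOn G L S φ ∧ a ≤ f φ) ∧
  (∀ W ⊆ S, ∀ c, (1/2 : ℝ)^W.card ≤ E (fun φ => ind (∀ w ∈ W, φ w ≠ c))) ∧
  (∀ v ∈ S, ∀ c ∈ L v, (1/2 : ℝ)^d / (d+2) ≤ E (fun φ => ind (φ v = c)))

open Classical in
noncomputable def stepT {V : Type} (A : (V → ℕ) → Finset ℕ) (v : V) :
    ((V → ℕ) → ℝ) →ₗ[ℝ] ((V → ℕ) → ℝ) where
  toFun f := fun φ => (∑ c ∈ A φ, f (Function.update φ v c)) / ((A φ).card : ℝ)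
  map_add' f g := by
    funext φ; simp [Finset.sum_add_distrib, add_div]
  map_smul' a f := by
    funext φ; simp [← Finset.mul_sum, mul_div_assoc]

open Classical in
lemma stepT_apply {V : Type} (A : (V → ℕ) → Finset ℕ) (v : V) (f : (V → ℕ) → ℝ) (φ : V → ℕ) :
    stepT A v f φ = (∑ c ∈ A φ, f (Function.update φ v c)) / ((A φ).card : ℝ) := rfl

open Classical in
lemma step {V : Type} (G : SimpleGraph V) (L : V → Finset ℕ) (d : ℕ)
    (hL : ∀ v, (L v).card = d + 2) (S : Finset V) (v : V) (hv : v ∉ S)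
    (hN : (S.filter (fun u => G.Adj v u)).card ≤ d)
    (E : ((V → ℕ) → ℝ) →ₗ[ℝ] ℝ) (hE : FlexDist G L d S E) :
    ∃ E', FlexDist G L d (insert v S) E' := by
  obtain ⟨h1, h2, h3, h4⟩ := hE
  set N := S.filter (fun u => G.Adj v u) with hNdef
  let A : (V → ℕ) → Finset ℕ := fun φ => L v \ N.image φ
  have hA2 : ∀ φ, 2 ≤ (A φ).card := by
    intro φ
    have := Finset.le_card_sdiff (N.image φ) (L v)
    have h' : (N.image φ).card ≤ N.card := Finset.card_image_le
    have := hL v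
    show 2 ≤ (L v \ N.image φ).card
    omega
  have hAd : ∀ φ, (A φ).card ≤ d + 2 := fun φ =>
    (Finset.card_le_card Finset.sdiff_subset).trans (hL v).le
  have hpos : ∀ φ, (0 : ℝ) < (A φ).card := fun φ => by
    have := hA2 φ
    exact_mod_cast (by omega : 0 < (A φ).card)
  have hupd : ∀ (φ : V → ℕ) (c : ℕ), ∀ u ∈ S, Function.update φ v c u = φ u := fun φ c u hu =>
    Function.update_of_ne (ne_of_mem_of_not_mem hu hv) _ _
  have hgood : ∀ φ, GoodOn G L S φ → ∀ c ∈ A φ, GoodOn G L (insert v S) (Function.update φ v c) := by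
    intro φ hφ c hc
    have hc' : c ∈ L v ∧ c ∉ N.image φ := Finset.mem_sdiff.1 hc
    have hcn : ∀ u ∈ S, G.Adj v u → φ u ≠ c := fun u hu ha he =>
      hc'.2 (Finset.mem_image.2 ⟨u, Finset.mem_filter.2 ⟨hu, ha⟩, he⟩)
    refine ⟨?_, ?_⟩
    · intro u hu
      rcases Finset.mem_insert.1 hu with rfl | hu
      · simpa using hc'.1
      · rw [hupd φ c u hu]; exact hφ.1 u hu
    · intro u hu w hw ha
      rcases Finset.mem_insert.1 hu with rfl | hu' <;> rcases Finset.mem_insert.1 hw with rfl | hw'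
      · exact absurd ha (G.loopless.irrefl _)
      · rw [hupd φ c w hw', Function.update_self]; exact (hcn w hw' ha).symm
      · rw [hupd φ c u hu', Function.update_self]; exact hcn u hu' ha.symm
      · rw [hupd φ c u hu', hupd φ c w hw']; exact hφ.2 u hu' w hw' ha
  have hconst : ∀ (f : (V → ℕ) → ℝ) φ, (∀ c, f (Function.update φ v c) = f φ) →
      stepT A v f φ = f φ := by
    intro f φ h
    rw [stepT_apply]
    simp only [h, Finset.sum_const, nsmul_eq_mul]
    field_simp [(hpos φ).ne']
  refine ⟨E.comp (stepT A v), ?_, ?_, ?_, ?_⟩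
  · intro f g hfg
    apply h1
    intro φ hφ
    rw [stepT_apply, stepT_apply]
    apply div_le_div_of_nonneg_right _ (hpos φ).le
    exact Finset.sum_le_sum fun c hc => hfg _ (hgood φ hφ c hc)
  · intro f a ha
    obtain ⟨φ, hφ, hf⟩ := h2 _ a ha
    rw [stepT_apply, le_div_iff₀ (hpos φ)] at hf
    have hne : (A φ).Nonempty := Finset.card_pos.1 (by have := hA2 φ; omega)
    obtain ⟨c, hc, hle⟩ := Finset.exists_le_of_sum_le (s := A φ) (f := fun _ => a)
      (g := fun c => f (Function.update φ v c)) hne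
      (by simpa [mul_comm] using hf)
    exact ⟨_, hgood φ hφ c hc, hle⟩
  · intro W hW c
    by_cases hvW : v ∈ W
    · have hsub : W.erase v ⊆ S := by
        intro u hu
        have := Finset.mem_erase.1 hu
        exact (Finset.mem_insert.1 (hW this.2)).resolve_left this.1
      have key := h3 _ hsub c
      have hcard : W.card = (W.erase v).card + 1 := (Finset.card_erase_add_one hvW).symm
      rw [hcard, pow_succ]
      have : (1/2 : ℝ) * E (fun φ => ind (∀ w ∈ W.erase v, φ w ≠ c)) ≤
          (E.comp (stepT A v)) (fun φ => ind (∀ w ∈ W, φ w ≠ c)) := by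
        rw [← smul_eq_mul, ← map_smul]
        apply h1
        intro φ hφ
        rw [stepT_apply]
        simp only [Pi.smul_apply, smul_eq_mul]
        by_cases hP : ∀ w ∈ W.erase v, φ w ≠ c
        · have e1 : ind (∀ w ∈ W.erase v, φ w ≠ c) = 1 := if_pos hP
          rw [e1, le_div_iff₀ (hpos φ)]
          have : ∑ x ∈ (A φ).erase c, (1:ℝ) ≤
              ∑ x ∈ A φ, ind (∀ w ∈ W, Function.update φ v x w ≠ c) := by
            refine le_trans (Finset.sum_le_sum ?_)
              (Finset.sum_le_sum_of_subset_of_nonneg (Finset.erase_subset c (A φ))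
                (fun _ _ _ => ind_nonneg _))
            intro x hx
            refine le_of_eq (Eq.symm (if_pos ?_))
            intro w hw
            by_cases hwv : w = v
            · subst hwv; rw [Function.update_self]; exact (Finset.mem_erase.1 hx).1
            · rw [Function.update_of_ne hwv]; exact hP w (Finset.mem_erase.2 ⟨hwv, hw⟩)
          refine le_trans ?_ this
          have h5 := Finset.pred_card_le_card_erase (s := A φ) (a := c)
          have h6 := hA2 φ
          have h7 : (A φ).card ≤ 2 * ((A φ).erase c).card := by omega
          have h8 : ((A φ).card : ℝ) ≤ 2 * ((A φ).erase c).card := by exact_mod_cast h7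
          simp only [Finset.sum_const, nsmul_eq_mul, mul_one]
          linarith
        · have e1 : ind (∀ w ∈ W.erase v, φ w ≠ c) = 0 := if_neg hP
          rw [e1, mul_zero]
          exact div_nonneg (Finset.sum_nonneg fun _ _ => ind_nonneg _) (hpos φ).le
      linarith
    · have hsub : W ⊆ S := (Finset.subset_insert_iff_of_notMem hvW).1 hW
      refine (h3 W hsub c).trans (h1 _ _ fun φ hφ => le_of_eq (Eq.symm ?_))
      apply hconst (fun φ => ind (∀ w ∈ W, φ w ≠ c))
      intro x
      congr 1
      apply propext
      exact forall₂_congr fun w hw => by rw [hupd φ x w (hsub hw)]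
  · intro u hu c hc
    rcases Finset.mem_insert.1 hu with rfl | hu
    · have key := h3 N (Finset.filter_subset _ _) c
      have hd : (1/2:ℝ)^d ≤ (1/2)^N.card :=
        pow_le_pow_of_le_one (by norm_num) (by norm_num) hN
      have hd2 : (0:ℝ) < (d:ℝ) + 2 := by positivity
      have : (1/((d:ℝ)+2)) * E (fun φ => ind (∀ w ∈ N, φ w ≠ c)) ≤
          (E.comp (stepT A u)) (fun φ => ind (φ u = c)) := by
        rw [← smul_eq_mul, ← map_smul]
        apply h1
        intro φ hφ
        rw [stepT_apply]
        simp only [Pi.smul_apply, smul_eq_mul, Function.update_self]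
        by_cases hP : ∀ w ∈ N, φ w ≠ c
        · have e1 : ind (∀ w ∈ N, φ w ≠ c) = 1 := if_pos hP
          have hcA : c ∈ A φ := by
            refine Finset.mem_sdiff.2 ⟨hc, fun h => ?_⟩
            obtain ⟨w, hw, he⟩ := Finset.mem_image.1 h
            exact hP w hw he
          have h9 : ind (c = c) ≤ ∑ x ∈ A φ, ind (x = c) :=
            Finset.single_le_sum (f := fun x => ind (x = c)) (fun _ _ => ind_nonneg _) hcA
          have e2 : ind (c = c) = 1 := if_pos rfl
          rw [e2] at h9
          rw [e1, mul_one]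
          apply div_le_div₀ (by linarith) h9 (hpos φ)
          exact_mod_cast hAd φ
        · have e1 : ind (∀ w ∈ N, φ w ≠ c) = 0 := if_neg hP
          rw [e1, mul_zero]
          exact div_nonneg (Finset.sum_nonneg fun _ _ => ind_nonneg _) (hpos φ).le
      refine le_trans ?_ this
      rw [div_eq_mul_one_div, mul_comm]
      exact mul_le_mul_of_nonneg_left (hd.trans key) (by positivity)
    · refine (h4 u hu c hc).trans (h1 _ _ fun φ hφ => le_of_eq (Eq.symm ?_))
      apply hconst (fun φ => ind (φ u = c))
      intro x
      rw [hupd φ x u hu]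

open Classical in
lemma exists_dist {V : Type} [Fintype V] (G : SimpleGraph V) (L : V → Finset ℕ) (d : ℕ)
    (hG : Degenerate G d) (hL : ∀ v, (L v).card = d + 2) (S : Finset V) :
    ∃ E, FlexDist G L d S E := by
  induction S using Finset.strongInduction with
  | H S ih =>
    rcases S.eq_empty_or_nonempty with rfl | hne
    · refine ⟨LinearMap.proj (fun _ => 0), ?_, ?_, ?_, ?_⟩
      · intro f g h
        exact h _ ⟨by simp, by simp⟩
      · intro f a h
        exact ⟨_, ⟨by simp, by simp⟩, h⟩
      · intro W hW c
        obtain rfl := Finset.subset_empty.1 hW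
        simp [ind]
      · simp
    · obtain ⟨v, hv, hd⟩ := hG ((⊤ : G.Subgraph).induce (S : Set V)) (by simpa using hne)
      have hvS : v ∈ S := by simpa using hv
      obtain ⟨E, hE⟩ := ih (S.erase v) (Finset.erase_ssubset hvS)
      have := step G L d hL (S.erase v) v (Finset.notMem_erase _ _) ?_ E hE
      · rwa [Finset.insert_erase hvS] at this
      · rw [← Set.ncard_coe_finset]
        refine le_trans (Set.ncard_le_ncard ?_ (Set.toFinite _)) hd
        intro u hu
        simp at hu
        simp [hvS, hu]

theorem stmt0 (d : ℕ) :
    ∃ ε : ℝ, 0 < ε ∧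
      ∀ (V : Type) [Fintype V] (G : SimpleGraph V) (L : V → Finset ℕ),
        Degenerate G d → (∀ v, d + 2 ≤ (L v).card) → Flexible G L ε := by
  classical
  refine ⟨(1/2 : ℝ)^d / (d+2), by positivity, ?_⟩
  intro V _ G L hG hL D r hr
  have hex : ∀ v, ∃ T ⊆ L v, T.card = d + 2 ∧ (v ∈ D → r v ∈ T) := by
    intro v
    by_cases hv : v ∈ D
    · obtain ⟨T, h1, h2, h3⟩ := Finset.exists_subsuperset_card_eq
        (Finset.singleton_subset_iff.2 (hr v hv)) (n := d + 2) (by simp) (hL v)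
      exact ⟨T, h2, h3, fun _ => h1 (Finset.mem_singleton_self _)⟩
    · obtain ⟨T, h1, h2⟩ := Finset.exists_subset_card_eq (hL v)
      exact ⟨T, h1, h2, fun h => absurd h hv⟩
  choose L' hsub hcard hreq using hex
  obtain ⟨E, h1, h2, h3, h4⟩ := exists_dist G L' d hG hcard Finset.univ
  have hsum : (1/2 : ℝ)^d / (d+2) * D.card ≤ E (∑ v ∈ D, fun φ => ind (φ v = r v)) := by
    rw [map_sum, mul_comm, ← nsmul_eq_mul]
    exact Finset.card_nsmul_le_sum _ _ _ fun v hv => h4 v (Finset.mem_univ _) _ (hreq v hv)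
  obtain ⟨φ, hφ, hle⟩ := h2 _ _ hsum
  refine ⟨φ, ⟨fun v => hsub v (hφ.1 v (Finset.mem_univ _)), fun u w ha =>
    hφ.2 u (Finset.mem_univ _) w (Finset.mem_univ _) ha⟩, hle.trans (le_of_eq ?_)⟩
  simp only [Finset.sum_apply, ind]
  rw [Finset.card_filter]
  push_cast
  exact Finset.sum_congr rfl fun v _ => by split_ifs <;> rfl
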